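/- arXiv:2202.04634 — 2 statements merged into one kernel-verified Lean document; each statement's English description precedes it below -/
import Mathlib

section
/- Fix δ ∈ (0,1). Suppose strong concentrability holds: d^π(s)/d^D(s) ≤ B_{w,u} for every policy π and state s, and d*_0(s)/d^D(s) ≥ B_{w,l} > 0 for every state s, for some optimal occupancy d*_0. Suppose also d*_0/d^D ≤ B_{w,0} pointwise, v*_0 ∈ V, w*_0 ∈ W, 0 ≤ w ≤ B_{w,0} for all w ∈ W, every w ∈ W satisfies Σ_a π_D(a|s)w(s,a) ≥ B_{w,l} for all s, and 0 ≤ v(s) ≤ 1/(1−γ) for all v ∈ V and s. Then with probability at least 1−δ, PRO-RL with input α = 0 outputs π̂ with J(π*_0) − J(π̂) ≤ (2·B_{w,0}·B_{w,u}/((1−γ)·B_{w,l}))·√(2·log(4|V||W|/δ)/n) + (B_{w,u}/B_{w,l})·√(2·log(4|V|/δ)/n0). -/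
open MeasureTheory
open scoped BigOperators ENNReal

namespace ProRL

/-- The discrete measure on a type induced by a real-valued weight function. -/
noncomputable def discMeasure {X : Type*} [MeasurableSpace X] (p : X → ℝ) : Measure X :=
  Measure.sum fun x => ENNReal.ofReal (p x) • Measure.dirac x

variable {S A : Type*} [Fintype S] [Fintype A]

/-- The `t`-step state-action distribution of policy `π` started from `μ0`. -/
noncomputable def saDist (P : S → A → S → ℝ) (μ0 : S → ℝ) (π : S → A → ℝ) :
    ℕ → S → A → ℝ
  | 0 => fun s a => μ0 s * π s a
  | t + 1 => fun s a =>
      (∑ s' : S, ∑ a' : A, saDist P μ0 π t s' a' * P s' a' s) * π s a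

/-- The discounted state-action occupancy `d^π(s,a)`. -/
noncomputable def occ (P : S → A → S → ℝ) (μ0 : S → ℝ) (γ : ℝ) (π : S → A → ℝ)
    (s : S) (a : A) : ℝ :=
  (1 - γ) * ∑' t : ℕ, γ ^ t * saDist P μ0 π t s a

/-- The (normalized) expected discounted return `J(π) = E_{d^π}[r]`. -/
noncomputable def Jret (P : S → A → S → ℝ) (r : S → A → ℝ) (μ0 : S → ℝ) (γ : ℝ)
    (π : S → A → ℝ) : ℝ :=
  ∑ s : S, ∑ a : A, occ P μ0 γ π s a * r s a

/-- `π` is a (stationary, stochastic) policy. -/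
def IsPolicy (π : S → A → ℝ) : Prop :=
  (∀ s a, 0 ≤ π s a) ∧ ∀ s, ∑ a : A, π s a = 1

/-- The Bellman residual `e_v(s,a) = r(s,a) + γ ∑_{s'} P(s'|s,a) v(s') − v(s)`. -/
noncomputable def eV (P : S → A → S → ℝ) (r : S → A → ℝ) (γ : ℝ) (v : S → ℝ)
    (s : S) (a : A) : ℝ :=
  r s a + γ * ∑ s' : S, P s a s' * v s' - v s

/-- The population Lagrangian `L_α(v,w)`. -/
noncomputable def Lag (P : S → A → S → ℝ) (r : S → A → ℝ) (μ0 : S → ℝ) (γ : ℝ)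
    (dD : S → A → ℝ) (f : ℝ → ℝ) (α : ℝ) (v : S → ℝ) (w : S → A → ℝ) : ℝ :=
  (1 - γ) * ∑ s : S, μ0 s * v s
    - α * ∑ s : S, ∑ a : A, dD s a * f (w s a)
    + ∑ s : S, ∑ a : A, dD s a * (w s a * eV P r γ v s a)

/-- The empirical Lagrangian `L̂_α(v,w)` built from the transition dataset `D`
(`D i = ((sᵢ,aᵢ), s'ᵢ)`, with `rᵢ = r sᵢ aᵢ`) and initial-state dataset `D0`. -/
noncomputable def empLag (r : S → A → ℝ) (γ : ℝ) (f : ℝ → ℝ) (α : ℝ) {n n0 : ℕ}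
    (D : Fin n → (S × A) × S) (D0 : Fin n0 → S) (v : S → ℝ) (w : S → A → ℝ) : ℝ :=
  (1 - γ) * ((n0 : ℝ)⁻¹ * ∑ j : Fin n0, v (D0 j))
    - α * ((n : ℝ)⁻¹ * ∑ i : Fin n, f (w (D i).1.1 (D i).1.2))
    + (n : ℝ)⁻¹ * ∑ i : Fin n,
        w (D i).1.1 (D i).1.2 *
          (r (D i).1.1 (D i).1.2 + γ * v (D i).2 - v (D i).1.1)

/-- Per-state normalization of a state-action weight into a policy
(uniform where the state marginal is not positive). -/
noncomputable def normPolicy (d : S → A → ℝ) (s : S) (a : A) : ℝ :=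
  if 0 < ∑ a' : A, d s a' then d s a / ∑ a' : A, d s a'
  else (Fintype.card A : ℝ)⁻¹

/-- Policy extraction from a density ratio `w` and a behavior policy `piD`
(uniform where the normalizer vanishes). -/
noncomputable def extractPolicy (piD w : S → A → ℝ) (s : S) (a : A) : ℝ :=
  if 0 < ∑ a' : A, w s a' * piD s a' then
    w s a * piD s a / ∑ a' : A, w s a' * piD s a'
  else (Fintype.card A : ℝ)⁻¹

/-- Behavior policy `π_D(a|s)` obtained from the data distribution `d^D`. -/
noncomputable def behPolicy (dD : S → A → ℝ) : S → A → ℝ := normPolicy dD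

/-- The state-action measure `d(s,a) = w(s,a)·d^D(s,a)`. -/
noncomputable def dstar (dD w : S → A → ℝ) : S → A → ℝ := fun s a => w s a * dD s a

/-- The weighted `L²(d^D)` norm of a state-action function. -/
noncomputable def l2nrm (dD g : S → A → ℝ) : ℝ :=
  Real.sqrt (∑ s : S, ∑ a : A, dD s a * g s a ^ 2)

/-- `‖π(·|s) − π'(·|s)‖₁`. -/
noncomputable def l1Pol (π π' : S → A → ℝ) (s : S) : ℝ := ∑ a : A, |π s a - π' s a|

/-- `E_{s ∼ d}[‖π(·|s) − π'(·|s)‖₁]` where `d` is a state-action distribution. -/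
noncomputable def expL1 (d π π' : S → A → ℝ) : ℝ :=
  ∑ s : S, (∑ a : A, d s a) * l1Pol π π' s

/-- The statistical error term `ε_stat`. -/
noncomputable def epsStat (γ α Bv Bf Bw Be δ : ℝ) (nV nW n n0 : ℕ) : ℝ :=
  (1 - γ) * Bv * Real.sqrt (2 * Real.log (4 * (nV : ℝ) / δ) / (n0 : ℝ))
    + (α * Bf + Bw * Be) *
        Real.sqrt (2 * Real.log (4 * ((nV : ℝ) * (nW : ℝ)) / δ) / (n : ℝ))

/-- The Bellman flow equations for a state-action measure `d`. -/
def BellmanFlow (P : S → A → S → ℝ) (μ0 : S → ℝ) (γ : ℝ) (d : S → A → ℝ) : Prop :=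
  ∀ s : S, ∑ a : A, d s a
    = (1 - γ) * μ0 s + γ * ∑ s' : S, ∑ a' : A, P s' a' s * d s' a'

/-- `(v,w)` is a saddle point of `max_{w ≥ 0} min_v L_α(v,w)`. -/
def IsSaddle (P : S → A → S → ℝ) (r : S → A → ℝ) (μ0 : S → ℝ) (γ : ℝ)
    (dD : S → A → ℝ) (f : ℝ → ℝ) (α : ℝ) (v : S → ℝ) (w : S → A → ℝ) : Prop :=
  (∀ s a, 0 ≤ w s a) ∧
  (∀ v' : S → ℝ, Lag P r μ0 γ dD f α v w ≤ Lag P r μ0 γ dD f α v' w) ∧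
  (∀ w' : S → A → ℝ, (∀ s a, 0 ≤ w' s a) →
    Lag P r μ0 γ dD f α v w' ≤ Lag P r μ0 γ dD f α v w)

/-- `(v,w)` is a saddle point of `max_{0 ≤ w ≤ Bw} min_v L_α(v,w)` (constrained LP). -/
def IsSaddleB (P : S → A → S → ℝ) (r : S → A → ℝ) (μ0 : S → ℝ) (γ : ℝ)
    (dD : S → A → ℝ) (f : ℝ → ℝ) (α Bw : ℝ) (v : S → ℝ) (w : S → A → ℝ) : Prop :=
  (∀ s a, 0 ≤ w s a ∧ w s a ≤ Bw) ∧
  (∀ v' : S → ℝ, Lag P r μ0 γ dD f α v w ≤ Lag P r μ0 γ dD f α v' w) ∧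
  (∀ w' : S → A → ℝ, (∀ s a, 0 ≤ w' s a ∧ w' s a ≤ Bw) →
    Lag P r μ0 γ dD f α v w' ≤ Lag P r μ0 γ dD f α v w)

/-- `(vhat, what)` is an exact max-min point of the empirical Lagrangian over `V × W`:
`vhat ∈ argmin_{v ∈ V} L̂(v, what)` and `what ∈ argmax_{w ∈ W} min_{v ∈ V} L̂(v, w)`. -/
def IsProRLOutput (r : S → A → ℝ) (γ : ℝ) (f : ℝ → ℝ) (α : ℝ)
    (V : Finset (S → ℝ)) (W : Finset (S → A → ℝ)) {n n0 : ℕ}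
    (D : Fin n → (S × A) × S) (D0 : Fin n0 → S)
    (vhat : S → ℝ) (what : S → A → ℝ) : Prop :=
  vhat ∈ V ∧ what ∈ W ∧
  (∀ v ∈ V, empLag r γ f α D D0 vhat what ≤ empLag r γ f α D D0 v what) ∧
  ∀ w ∈ W, ∀ vw ∈ V,
    (∀ v ∈ V, empLag r γ f α D D0 vw w ≤ empLag r γ f α D D0 v w) →
      empLag r γ f α D D0 vw w ≤ empLag r γ f α D D0 vhat what

/-- Weight of a transition tuple `((s,a),s')` under `(s,a) ∼ d^D`, `s' ∼ P(·|s,a)`. -/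
noncomputable def tupleWeight (P : S → A → S → ℝ) (dD : S → A → ℝ)
    (x : (S × A) × S) : ℝ :=
  dD x.1.1 x.1.2 * P x.1.1 x.1.2 x.2

/-- The joint law of the transition dataset `D` (i.i.d. from `d^D ⊗ P`) and the
initial-state dataset `D0` (i.i.d. from `μ0`). -/
noncomputable def dataMeasure [MeasurableSpace S] [MeasurableSpace A]
    (P : S → A → S → ℝ) (dD : S → A → ℝ) (μ0 : S → ℝ) (n n0 : ℕ) :
    Measure ((Fin n → (S × A) × S) × (Fin n0 → S)) :=
  (Measure.pi fun _ : Fin n => discMeasure (tupleWeight P dD)).prod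
    (Measure.pi fun _ : Fin n0 => discMeasure μ0)

/-- The joint law of datasets `D1`, `D2` (both i.i.d. from `d^D ⊗ P`) and `D0`
(i.i.d. from `μ0`), used by PRO-RL-BC. -/
noncomputable def dataMeasure3 [MeasurableSpace S] [MeasurableSpace A]
    (P : S → A → S → ℝ) (dD : S → A → ℝ) (μ0 : S → ℝ) (n1 n2 n0 : ℕ) :
    Measure ((Fin n1 → (S × A) × S) × (Fin n2 → (S × A) × S) × (Fin n0 → S)) :=
  (Measure.pi fun _ : Fin n1 => discMeasure (tupleWeight P dD)).prod
    ((Measure.pi fun _ : Fin n2 => discMeasure (tupleWeight P dD)).prod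
      (Measure.pi fun _ : Fin n0 => discMeasure μ0))

/-- `v` is the optimal value function: it satisfies the Bellman optimality equation. -/
def IsOptValue [Nonempty A] (P : S → A → S → ℝ) (r : S → A → ℝ) (γ : ℝ)
    (v : S → ℝ) : Prop :=
  ∀ s : S, v s = Finset.univ.sup' Finset.univ_nonempty
    (fun a : A => r s a + γ * ∑ s' : S, P s a s' * v s')

/-- Basic assumptions on the MDP, the regularizer-free data, and the data distribution. -/
structure MDPAssumptions (P : S → A → S → ℝ) (r : S → A → ℝ) (μ0 : S → ℝ) (γ : ℝ)
    (dD : S → A → ℝ) : Prop where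
  P_nonneg : ∀ s a s', 0 ≤ P s a s'
  P_sum : ∀ s a, ∑ s' : S, P s a s' = 1
  r_nonneg : ∀ s a, 0 ≤ r s a
  r_le_one : ∀ s a, r s a ≤ 1
  γ_nonneg : 0 ≤ γ
  γ_lt_one : γ < 1
  μ0_pos : ∀ s, 0 < μ0 s
  μ0_sum : ∑ s : S, μ0 s = 1
  dD_nonneg : ∀ s a, 0 ≤ dD s a
  dD_sum : ∑ s : S, ∑ a : A, dD s a = 1

/-- Regularity of the regularizer `f`: continuously differentiable with derivative `f'`,
`M_f`-strongly convex, and with `|f'| ≤ Bf'`, `|f| ≤ Bf` on `[0, Bw]`. -/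
structure RegAssumptions (f f' : ℝ → ℝ) (Mf Bw Bf' Bf : ℝ) : Prop where
  deriv : ∀ x, HasDerivAt f (f' x) x
  strong : StrongConvexOn Set.univ Mf f
  Mf_pos : 0 < Mf
  f'_bdd : ∀ x, 0 ≤ x → x ≤ Bw → |f' x| ≤ Bf'
  f_bdd : ∀ x, 0 ≤ x → x ≤ Bw → |f x| ≤ Bf

/-- `w` is an optimal density ratio of the unregularized LP (the set `W*₀`). -/
def OptRatio (P : S → A → S → ℝ) (r : S → A → ℝ) (μ0 : S → ℝ) (γ : ℝ)
    (dD : S → A → ℝ) (w : S → A → ℝ) : Prop :=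
  (∀ s a, 0 ≤ w s a) ∧ BellmanFlow P μ0 γ (dstar dD w) ∧
  ∀ w' : S → A → ℝ, (∀ s a, 0 ≤ w' s a) → BellmanFlow P μ0 γ (dstar dD w') →
    ∑ s : S, ∑ a : A, dstar dD w' s a * r s a
      ≤ ∑ s : S, ∑ a : A, dstar dD w s a * r s a

/-!
For a weight `w` whose measure `d = w · d^D` satisfies the Bellman flow equations, `L_0(v, w)` is
the return `E_d[r]` whatever `v` is. Hence `L_0(·, w*_0) = J(π*_0)`, and uniform concentration of
`L̂_0` around `L_0`, within `ε` on `V × W`, turns the empirical max-min property of `ŵ` into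
`J(π*_0) ≤ L_0(v*_0, ŵ) + 2ε`. As `(1 - γ) E_{μ0}[v*_0] = J(π*_0)`, this says
`-∑ ŵ d^D e_{v*_0} ≤ 2ε`.

The performance difference identity writes the suboptimality of `π̂` as `-∑ d^π̂ e_{v*_0}`. The
residual `e_{v*_0}` is nonpositive, and concentrability together with the lower bound on the
normalizer of `ŵ` gives `d^π̂ ≤ (B_{w,u} / B_{w,l}) ŵ d^D` pointwise, so the suboptimality is at
most `(B_{w,u} / B_{w,l}) · 2ε`.
-/

section Hoeffding

open ProbabilityTheory
open scoped NNReal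

section Subgaussian

variable {Ω : Type*} [MeasurableSpace Ω] {μ : Measure Ω}

lemma measureReal_le_abs_le_of_hasSubgaussianMGF {X : Ω → ℝ} {c : ℝ≥0}
    (hX : HasSubgaussianMGF X c μ) {ε : ℝ} (hε : 0 ≤ ε) :
    μ.real {ω | ε ≤ |X ω|} ≤ 2 * Real.exp (-ε ^ 2 / (2 * c)) := by
  have hunion : {ω | ε ≤ |X ω|} = {ω | ε ≤ X ω} ∪ {ω | ε ≤ (-X) ω} := by
    ext ω
    simp only [Set.mem_union, Set.mem_ofPred_eq, Pi.neg_apply, le_abs]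
  rw [hunion, two_mul]
  exact (measureReal_union_le _ _).trans
    (add_le_add (hX.measure_ge_le hε) (hX.neg.measure_ge_le hε))

variable [IsFiniteMeasure μ]

lemma measureReal_sqrt_lt_abs_le_of_hasSubgaussianMGF {X : Ω → ℝ} {c : ℝ≥0}
    (hX : HasSubgaussianMGF X c μ) {p : ℝ} (hp0 : 0 < p) (hp1 : p ≤ 1) :
    μ.real {ω | √(c * (2 * Real.log p⁻¹)) < |X ω|} ≤ 2 * p := by
  have hlog : 0 ≤ Real.log p⁻¹ := Real.log_nonneg ((one_le_inv₀ hp0).2 hp1)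
  rcases eq_or_ne c 0 with rfl | hc
  · have hX0 : X =ᵐ[μ] 0 := HasSubgaussianMGF.ae_eq_zero_of_hasSubgaussianMGF_zero hX
    have hnull : μ {ω | √((0 : ℝ≥0) * (2 * Real.log p⁻¹)) < |X ω|} = 0 :=
      measure_mono_null (fun ω hω => by simpa using hω) (ae_iff.1 hX0)
    rw [measureReal_def, hnull, ENNReal.toReal_zero]
    positivity
  · have hc' : (c : ℝ) ≠ 0 := mod_cast hc
    have hexp : Real.exp (-√(c * (2 * Real.log p⁻¹)) ^ 2 / (2 * c)) = p := by
      have hexponent : -√(c * (2 * Real.log p⁻¹)) ^ 2 / (2 * c) = Real.log p := by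
        rw [Real.sq_sqrt (by positivity), Real.log_inv]
        field_simp
      rw [hexponent, Real.exp_log hp0]
    calc μ.real {ω | √(c * (2 * Real.log p⁻¹)) < |X ω|}
        ≤ μ.real {ω | √(c * (2 * Real.log p⁻¹)) ≤ |X ω|} :=
          measureReal_mono fun ω hω => by
            simp only [Set.mem_ofPred_eq] at hω ⊢
            exact hω.le
      _ ≤ 2 * p := by
          have h := measureReal_le_abs_le_of_hasSubgaussianMGF hX
            (Real.sqrt_nonneg (c * (2 * Real.log p⁻¹)))
          rwa [hexp] at h

lemma measureReal_exists_sqrt_lt_abs_le_of_hasSubgaussianMGF {ι : Type*} (F : Finset ι)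
    {X : ι → Ω → ℝ} {c : ℝ≥0} (hX : ∀ k ∈ F, HasSubgaussianMGF (X k) c μ) {δ : ℝ}
    (hδ0 : 0 < δ) (hδ1 : δ ≤ 1) :
    μ.real {ω | ∃ k ∈ F, √(c * (2 * Real.log (2 * F.card / δ))) < |X k ω|} ≤ δ := by
  rcases F.eq_empty_or_nonempty with rfl | hF
  · simpa using hδ0.le
  have hcard : (1 : ℝ) ≤ F.card := mod_cast hF.card_pos
  have hp1 : δ / (2 * F.card) ≤ 1 := (div_le_one (by positivity)).2 (by linarith)
  have hunion : {ω | ∃ k ∈ F, √(c * (2 * Real.log (2 * F.card / δ))) < |X k ω|}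
      = ⋃ k ∈ F, {ω | √(c * (2 * Real.log (2 * F.card / δ))) < |X k ω|} := by
    ext ω
    simp only [Set.mem_iUnion, Set.mem_ofPred_eq, exists_prop]
  rw [hunion]
  calc _ ≤ ∑ k ∈ F, μ.real {ω | √(c * (2 * Real.log (2 * F.card / δ))) < |X k ω|} :=
        measureReal_biUnion_finset_le _ _
    _ ≤ ∑ _k ∈ F, 2 * (δ / (2 * F.card)) := Finset.sum_le_sum fun k hk => by
        simpa only [inv_div] using
          measureReal_sqrt_lt_abs_le_of_hasSubgaussianMGF (hX k hk) (by positivity) hp1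
    _ = δ := by
        rw [Finset.sum_const, nsmul_eq_mul]
        field_simp

end Subgaussian

/-- The empirical mean of `g` over the sample `x` (equal to `0` for the empty sample). -/
noncomputable def empMean {X : Type*} {n : ℕ} (g : X → ℝ) (x : Fin n → X) : ℝ :=
  (n : ℝ)⁻¹ * ∑ i, g (x i)

variable {X : Type*} [MeasurableSpace X] {μ : Measure X} [IsProbabilityMeasure μ]
  {n : ℕ}

lemma hasSubgaussianMGF_empMean_sub_integral (hn : 0 < n) {g : X → ℝ} (hg : Measurable g)
    {a b : ℝ} (hgab : ∀ x, g x ∈ Set.Icc a b) :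
    HasSubgaussianMGF (fun x => empMean g x - ∫ y, g y ∂μ) ((‖b - a‖₊ / 2) ^ 2 / n)
      (Measure.pi fun _ : Fin n => μ) := by
  have hindep : iIndepFun (fun (i : Fin n) (x : Fin n → X) => g (x i) - ∫ y, g y ∂μ)
      (Measure.pi fun _ : Fin n => μ) :=
    iIndepFun_pi (X := fun _ y => g y - ∫ y, g y ∂μ) fun _ => (hg.sub_const _).aemeasurable
  have hcoord : ∀ i ∈ (Finset.univ : Finset (Fin n)),
      HasSubgaussianMGF (fun x : Fin n → X => g (x i) - ∫ y, g y ∂μ)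
        ((‖b - a‖₊ / 2) ^ 2) (Measure.pi fun _ : Fin n => μ) := by
    intro i _
    have h := hasSubgaussianMGF_of_mem_Icc (μ := Measure.pi fun _ : Fin n => μ)
      (X := fun x : Fin n → X => g (x i)) (hg.comp (measurable_pi_apply i)).aemeasurable
      (.of_forall fun x => hgab (x i))
    rwa [integral_comp_eval (μ := fun _ : Fin n => μ) hg.aestronglyMeasurable] at h
  have hmean := (HasSubgaussianMGF.sum_of_iIndepFun hindep hcoord).const_mul (n : ℝ)⁻¹
  convert hmean using 1
  · funext x
    simp only [empMean, Finset.sum_sub_distrib, Finset.sum_const, Finset.card_univ,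
      Fintype.card_fin, nsmul_eq_mul]
    field_simp
  · apply NNReal.coe_injective
    rw [Finset.sum_const, Finset.card_univ, Fintype.card_fin, nsmul_eq_mul]
    change _ = (n : ℝ)⁻¹ ^ 2 * ((n * (‖b - a‖₊ / 2) ^ 2 : ℝ≥0) : ℝ)
    push_cast
    field_simp

lemma measureReal_exists_lt_abs_empMean_sub_integral_le {ι : Type*} (F : Finset ι)
    {g : ι → X → ℝ} (hg : ∀ k ∈ F, Measurable (g k)) {a b : ℝ}
    (hgab : ∀ k ∈ F, ∀ x, g k x ∈ Set.Icc a b) (hn : 0 < n) {δ : ℝ} (hδ0 : 0 < δ)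
    (hδ1 : δ ≤ 1) :
    (Measure.pi fun _ : Fin n => μ).real
        {x | ∃ k ∈ F, (b - a) / 2 * √(2 * Real.log (2 * F.card / δ) / n)
          < |empMean (g k) x - ∫ y, g k y ∂μ|} ≤ δ := by
  rcases F.eq_empty_or_nonempty with rfl | ⟨k, hk⟩
  · simpa using hδ0.le
  obtain ⟨x⟩ := nonempty_of_isProbabilityMeasure μ
  have hba : 0 ≤ b - a := sub_nonneg.2 ((hgab k hk x).1.trans (hgab k hk x).2)
  have hradius : ∀ L : ℝ, (b - a) / 2 * √(L / n)
      = √(((‖b - a‖₊ / 2) ^ 2 / n : ℝ≥0) * L) := by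
    intro L
    have hsplit : ((b - a) / 2) ^ 2 / n * L = ((b - a) / 2) ^ 2 * (L / n) := by ring
    push_cast
    rw [Real.norm_of_nonneg hba, hsplit, Real.sqrt_mul (sq_nonneg _),
      Real.sqrt_sq (by positivity)]
  simp only [hradius]
  exact measureReal_exists_sqrt_lt_abs_le_of_hasSubgaussianMGF F
    (fun k hk => hasSubgaussianMGF_empMean_sub_integral hn (hg k hk) (hgab k hk)) hδ0 hδ1

end Hoeffding

section Probability

lemma one_sub_ofReal_le_measure_of_measureReal_compl_le {Ω : Type*} [MeasurableSpace Ω]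
    {μ : Measure Ω} [IsProbabilityMeasure μ] {s : Set Ω} {δ : ℝ} (h : μ.real sᶜ ≤ δ) :
    1 - ENNReal.ofReal δ ≤ μ s := by
  rw [tsub_le_iff_right, ← measure_univ (μ := μ)]
  refine (measure_univ_le_add_compl s).trans ?_
  gcongr
  exact (ENNReal.le_ofReal_iff_toReal_le (measure_ne_top _ _)
    (measureReal_nonneg.trans h)).2 h

lemma measureReal_prod_fst_mem_or_snd_mem_le {X Y : Type*} [MeasurableSpace X]
    [MeasurableSpace Y] {μ : Measure X} {ν : Measure Y} [IsProbabilityMeasure μ]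
    [IsProbabilityMeasure ν] (s : Set X) (t : Set Y) :
    (μ.prod ν).real {ω | ω.1 ∈ s ∨ ω.2 ∈ t} ≤ μ.real s + ν.real t := by
  have hunion : {ω : X × Y | ω.1 ∈ s ∨ ω.2 ∈ t} = s ×ˢ Set.univ ∪ Set.univ ×ˢ t := by
    ext ω
    simp
  rw [hunion]
  refine (measureReal_union_le _ _).trans_eq ?_
  simp only [measureReal_prod_prod, probReal_univ, mul_one, one_mul]

variable {X : Type*} [Fintype X] [MeasurableSpace X] {p : X → ℝ}

lemma isProbabilityMeasure_discMeasure (hp : p ∈ stdSimplex ℝ X) :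
    IsProbabilityMeasure (discMeasure p) where
  measure_univ := by
    rw [discMeasure, Measure.sum_apply _ MeasurableSet.univ, tsum_fintype]
    simp only [Measure.smul_apply, measure_univ, smul_eq_mul, mul_one]
    rw [← ENNReal.ofReal_sum_of_nonneg fun x _ => hp.1 x, hp.2, ENNReal.ofReal_one]

lemma integral_discMeasure [MeasurableSingletonClass X] (hp : ∀ x, 0 ≤ p x) (g : X → ℝ) :
    ∫ x, g x ∂discMeasure p = ∑ x, p x * g x := by
  rw [discMeasure, Measure.sum_fintype, integral_finsetSum_measure fun x _ =>
    (integrable_dirac (by simp)).smul_measure ENNReal.ofReal_ne_top]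
  simp only [integral_smul_measure, integral_dirac, ENNReal.toReal_ofReal (hp _), smul_eq_mul]

end Probability

section Occupancy

variable {P : S → A → S → ℝ} {μ0 : S → ℝ} {γ : ℝ} {π : S → A → ℝ}

lemma sum_saDist_zero (hπ : IsPolicy π) (s : S) : ∑ a, saDist P μ0 π 0 s a = μ0 s := by
  simp only [saDist, ← Finset.mul_sum, hπ.2 s, mul_one]

lemma sum_saDist_succ (hπ : IsPolicy π) (t : ℕ) (s : S) :
    ∑ a, saDist P μ0 π (t + 1) s a = ∑ s', ∑ a', saDist P μ0 π t s' a' * P s' a' s := by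
  simp only [saDist, ← Finset.mul_sum, hπ.2 s, mul_one]

lemma saDist_eq_sum_mul (hπ : IsPolicy π) (t : ℕ) (s : S) (a : A) :
    saDist P μ0 π t s a = (∑ a', saDist P μ0 π t s a') * π s a := by
  cases t with
  | zero => rw [sum_saDist_zero hπ, saDist]
  | succ t => rw [sum_saDist_succ hπ, saDist]

lemma saDist_mem_stdSimplex (hP : ∀ s a, P s a ∈ stdSimplex ℝ S) (hμ0 : μ0 ∈ stdSimplex ℝ S)
    (hπ : IsPolicy π) (t : ℕ) :
    (fun x : S × A => saDist P μ0 π t x.1 x.2) ∈ stdSimplex ℝ (S × A) := by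
  induction t with
  | zero =>
    refine ⟨fun x => mul_nonneg (hμ0.1 x.1) (hπ.1 x.1 x.2), ?_⟩
    simp only [Fintype.sum_prod_type, sum_saDist_zero hπ, hμ0.2]
  | succ t ih =>
    refine ⟨fun x => mul_nonneg (Finset.sum_nonneg fun s' _ => Finset.sum_nonneg fun a' _ =>
      mul_nonneg (ih.1 (s', a')) ((hP s' a').1 x.1)) (hπ.1 x.1 x.2), ?_⟩
    calc ∑ x : S × A, saDist P μ0 π (t + 1) x.1 x.2
        = ∑ s, ∑ x : S × A, saDist P μ0 π t x.1 x.2 * P x.1 x.2 s := by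
          simp only [Fintype.sum_prod_type, sum_saDist_succ hπ]
      _ = ∑ x : S × A, saDist P μ0 π t x.1 x.2 := by
          rw [Finset.sum_comm]
          simp only [← Finset.mul_sum, (hP _ _).2, mul_one]
      _ = 1 := ih.2

lemma hasSum_pow_mul_saDist (hP : ∀ s a, P s a ∈ stdSimplex ℝ S) (hμ0 : μ0 ∈ stdSimplex ℝ S)
    (hγ : γ ∈ Set.Ico 0 1) (hπ : IsPolicy π) (s : S) (a : A) :
    HasSum (fun t => (1 - γ) * (γ ^ t * saDist P μ0 π t s a)) (occ P μ0 γ π s a) := by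
  have hmem (t : ℕ) : saDist P μ0 π t s a ∈ Set.Icc 0 1 :=
    mem_Icc_of_mem_stdSimplex (saDist_mem_stdSimplex hP hμ0 hπ t) (s, a)
  have hpow (t : ℕ) : 0 ≤ γ ^ t := pow_nonneg hγ.1 t
  have hsummable : Summable fun t => γ ^ t * saDist P μ0 π t s a :=
    .of_nonneg_of_le (fun t => mul_nonneg (hpow t) (hmem t).1)
      (fun t => mul_le_of_le_one_right (hpow t) (hmem t).2)
      (summable_geometric_of_lt_one hγ.1 hγ.2)
  exact hsummable.hasSum.mul_left (1 - γ)

lemma occ_nonneg (hP : ∀ s a, P s a ∈ stdSimplex ℝ S) (hμ0 : μ0 ∈ stdSimplex ℝ S)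
    (hγ : γ ∈ Set.Ico 0 1) (hπ : IsPolicy π) (s : S) (a : A) : 0 ≤ occ P μ0 γ π s a :=
  (hasSum_pow_mul_saDist hP hμ0 hγ hπ s a).nonneg fun t =>
    mul_nonneg (sub_nonneg.2 hγ.2.le)
      (mul_nonneg (pow_nonneg hγ.1 t) ((saDist_mem_stdSimplex hP hμ0 hπ t).1 (s, a)))

lemma occ_eq_sum_mul (hP : ∀ s a, P s a ∈ stdSimplex ℝ S) (hμ0 : μ0 ∈ stdSimplex ℝ S)
    (hγ : γ ∈ Set.Ico 0 1) (hπ : IsPolicy π) (s : S) (a : A) :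
    occ P μ0 γ π s a = (∑ a', occ P μ0 γ π s a') * π s a := by
  have hmarginal := (hasSum_sum (s := Finset.univ) fun a' _ =>
    hasSum_pow_mul_saDist hP hμ0 hγ hπ s a').mul_right (π s a)
  refine (hasSum_pow_mul_saDist hP hμ0 hγ hπ s a).unique (hmarginal.congr_fun ?_)
  intro t
  rw [saDist_eq_sum_mul hπ]
  simp only [← Finset.mul_sum, mul_assoc]

lemma bellmanFlow_occ (hP : ∀ s a, P s a ∈ stdSimplex ℝ S) (hμ0 : μ0 ∈ stdSimplex ℝ S)
    (hγ : γ ∈ Set.Ico 0 1) (hπ : IsPolicy π) : BellmanFlow P μ0 γ (occ P μ0 γ π) := by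
  intro s
  have hmarginal := hasSum_sum (s := Finset.univ) fun a _ =>
    hasSum_pow_mul_saDist hP hμ0 hγ hπ s a
  have hinflow := (hasSum_sum (s := Finset.univ) fun s' _ =>
    hasSum_sum (s := Finset.univ) fun a' _ =>
      (hasSum_pow_mul_saDist hP hμ0 hγ hπ s' a').mul_left (P s' a' s)).mul_left γ
  have hstep (t : ℕ) : ∑ a, (1 - γ) * (γ ^ (t + 1) * saDist P μ0 π (t + 1) s a)
      = γ * ∑ s', ∑ a', P s' a' s * ((1 - γ) * (γ ^ t * saDist P μ0 π t s' a')) := by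
    simp only [← Finset.mul_sum, sum_saDist_succ hπ]
    simp only [Finset.mul_sum]
    exact Finset.sum_congr rfl fun s' _ => Finset.sum_congr rfl fun a' _ => by ring
  have hzero : ∑ a, (1 - γ) * (γ ^ 0 * saDist P μ0 π 0 s a) = (1 - γ) * μ0 s := by
    simp only [← Finset.mul_sum, sum_saDist_zero hπ, pow_zero, one_mul]
  have hshift := HasSum.zero_add
    (f := fun t => ∑ a, (1 - γ) * (γ ^ t * saDist P μ0 π t s a)) (hinflow.congr_fun hstep)
  rw [hmarginal.unique hshift, hzero]

end Occupancy

section BellmanFlow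

variable {P : S → A → S → ℝ} {r : S → A → ℝ} {μ0 : S → ℝ} {γ : ℝ}

lemma sum_mul_sum_transition (d : S → A → ℝ) (v : S → ℝ) :
    ∑ s, ∑ a, d s a * ∑ s', P s a s' * v s'
      = ∑ s', (∑ s, ∑ a, P s a s' * d s a) * v s' := by
  calc ∑ s, ∑ a, d s a * ∑ s', P s a s' * v s'
      = ∑ x : S × A, ∑ s', P x.1 x.2 s' * d x.1 x.2 * v s' := by
        simp only [Fintype.sum_prod_type, Finset.mul_sum, mul_assoc, mul_left_comm (d _ _)]
    _ = ∑ s', ∑ x : S × A, P x.1 x.2 s' * d x.1 x.2 * v s' := Finset.sum_comm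
    _ = ∑ s', (∑ s, ∑ a, P s a s' * d s a) * v s' := by
        simp only [Fintype.sum_prod_type, Finset.sum_mul]

lemma BellmanFlow.add_sum_mul_eV {d : S → A → ℝ} (hd : BellmanFlow P μ0 γ d) (v : S → ℝ) :
    (1 - γ) * ∑ s, μ0 s * v s + ∑ s, ∑ a, d s a * eV P r γ v s a
      = ∑ s, ∑ a, d s a * r s a := by
  have hexp : ∑ s, ∑ a, d s a * eV P r γ v s a
      = ∑ s, ∑ a, d s a * r s a
        + γ * ∑ s, ∑ a, d s a * ∑ s', P s a s' * v s' - ∑ s, (∑ a, d s a) * v s := by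
    simp only [Finset.mul_sum (a := γ), Finset.sum_mul, ← Finset.sum_add_distrib,
      ← Finset.sum_sub_distrib]
    refine Finset.sum_congr rfl fun s _ => Finset.sum_congr rfl fun a _ => ?_
    rw [eV]
    ring
  have hflow : ∑ s, (∑ a, d s a) * v s
      = (1 - γ) * ∑ s, μ0 s * v s + γ * ∑ s, (∑ s', ∑ a', P s' a' s * d s' a') * v s := by
    rw [Finset.mul_sum, Finset.mul_sum, ← Finset.sum_add_distrib]
    refine Finset.sum_congr rfl fun s _ => ?_
    rw [hd s]
    ring
  rw [hexp, sum_mul_sum_transition, hflow]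
  ring

lemma BellmanFlow.sum_eq_one (hP : ∀ s a, P s a ∈ stdSimplex ℝ S) (hμ0 : μ0 ∈ stdSimplex ℝ S)
    (hγ : γ ≠ 1) {d : S → A → ℝ} (hd : BellmanFlow P μ0 γ d) : ∑ s, ∑ a, d s a = 1 := by
  have hmass := hd.add_sum_mul_eV (r := fun _ _ => 1 - γ) fun _ => 1
  have heV (s : S) (a : A) : eV P (fun _ _ => 1 - γ) γ (fun _ => 1) s a = 0 := by
    simp only [eV, mul_one, (hP s a).2]
    ring
  simp only [heV, mul_zero, Finset.sum_const_zero, add_zero, mul_one, hμ0.2,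
    ← Finset.sum_mul] at hmass
  exact (mul_eq_right₀ (sub_ne_zero.2 hγ.symm)).1 hmass.symm

end BellmanFlow

section PerformanceDifference

variable {P : S → A → S → ℝ} {r : S → A → ℝ} {μ0 : S → ℝ} {γ : ℝ} {π : S → A → ℝ}

lemma jret_eq_add_sum_occ_mul_eV (hP : ∀ s a, P s a ∈ stdSimplex ℝ S)
    (hμ0 : μ0 ∈ stdSimplex ℝ S) (hγ : γ ∈ Set.Ico 0 1) (hπ : IsPolicy π) (v : S → ℝ) :
    Jret P r μ0 γ π
      = (1 - γ) * ∑ s, μ0 s * v s + ∑ s, ∑ a, occ P μ0 γ π s a * eV P r γ v s a :=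
  ((bellmanFlow_occ hP hμ0 hγ hπ).add_sum_mul_eV v).symm

variable [Nonempty A] {v : S → ℝ}

lemma IsOptValue.eV_nonpos (hv : IsOptValue P r γ v) (s : S) (a : A) :
    eV P r γ v s a ≤ 0 := by
  have hle := Finset.le_sup' (fun a : A => r s a + γ * ∑ s' : S, P s a s' * v s')
    (Finset.mem_univ a)
  rw [← hv s] at hle
  exact sub_nonpos.2 hle

lemma IsOptValue.exists_eV_eq_zero (hv : IsOptValue P r γ v) (s : S) :
    ∃ a, eV P r γ v s a = 0 := by
  obtain ⟨a, -, ha⟩ := Finset.exists_mem_eq_sup' Finset.univ_nonempty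
    (fun a : A => r s a + γ * ∑ s' : S, P s a s' * v s')
  rw [← hv s] at ha
  exact ⟨a, sub_eq_zero.2 ha.symm⟩

lemma IsOptValue.jret_le (hP : ∀ s a, P s a ∈ stdSimplex ℝ S) (hμ0 : μ0 ∈ stdSimplex ℝ S)
    (hγ : γ ∈ Set.Ico 0 1) (hv : IsOptValue P r γ v) (hπ : IsPolicy π) :
    Jret P r μ0 γ π ≤ (1 - γ) * ∑ s, μ0 s * v s := by
  rw [jret_eq_add_sum_occ_mul_eV hP hμ0 hγ hπ v, add_le_iff_nonpos_right]
  exact Finset.sum_nonpos fun s _ => Finset.sum_nonpos fun a _ =>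
    mul_nonpos_of_nonneg_of_nonpos (occ_nonneg hP hμ0 hγ hπ s a) (hv.eV_nonpos s a)

lemma IsOptValue.exists_isPolicy_jret_eq (hP : ∀ s a, P s a ∈ stdSimplex ℝ S)
    (hμ0 : μ0 ∈ stdSimplex ℝ S) (hγ : γ ∈ Set.Ico 0 1) (hv : IsOptValue P r γ v) :
    ∃ π : S → A → ℝ, IsPolicy π ∧ Jret P r μ0 γ π = (1 - γ) * ∑ s, μ0 s * v s := by
  classical
  choose act hact using hv.exists_eV_eq_zero
  have hpol : IsPolicy fun s => Pi.single (act s) (1 : ℝ) :=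
    ⟨fun s => (single_mem_stdSimplex ℝ (act s)).1, fun s => (single_mem_stdSimplex ℝ (act s)).2⟩
  refine ⟨_, hpol, ?_⟩
  rw [jret_eq_add_sum_occ_mul_eV hP hμ0 hγ hpol v, add_eq_left]
  refine Finset.sum_eq_zero fun s _ => Finset.sum_eq_zero fun a _ => ?_
  rw [occ_eq_sum_mul hP hμ0 hγ hpol]
  rcases eq_or_ne a (act s) with rfl | ha
  · rw [hact, mul_zero]
  · rw [Pi.single_eq_of_ne ha, mul_zero, zero_mul]

lemma IsOptValue.jret_eq (hP : ∀ s a, P s a ∈ stdSimplex ℝ S) (hμ0 : μ0 ∈ stdSimplex ℝ S)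
    (hγ : γ ∈ Set.Ico 0 1) (hv : IsOptValue P r γ v) (hπ : IsPolicy π)
    (hopt : ∀ π' : S → A → ℝ, IsPolicy π' → Jret P r μ0 γ π' ≤ Jret P r μ0 γ π) :
    Jret P r μ0 γ π = (1 - γ) * ∑ s, μ0 s * v s := by
  obtain ⟨π', hπ', hJ⟩ := hv.exists_isPolicy_jret_eq hP hμ0 hγ
  exact (hv.jret_le hP hμ0 hγ hπ).antisymm (hJ ▸ hopt π' hπ')

end PerformanceDifference

section PolicyExtraction

section Policy

variable {S A : Type*} [Fintype A] {dD piD w : S → A → ℝ}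

lemma isPolicy_extractPolicy [Nonempty A] (hpiD : ∀ s a, 0 ≤ piD s a)
    (hw : ∀ s a, 0 ≤ w s a) : IsPolicy (extractPolicy piD w) := by
  constructor
  · intro s a
    unfold extractPolicy
    split_ifs with h
    · exact div_nonneg (mul_nonneg (hw s a) (hpiD s a)) h.le
    · positivity
  · intro s
    unfold extractPolicy
    split_ifs with h
    · rw [← Finset.sum_div, div_self h.ne']
    · simp

lemma behPolicy_nonneg (hdD : ∀ s a, 0 ≤ dD s a) (s : S) (a : A) : 0 ≤ behPolicy dD s a := by
  unfold behPolicy normPolicy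
  split_ifs with h
  · exact div_nonneg (hdD s a) h.le
  · positivity

lemma sum_mul_behPolicy (hdD : ∀ s a, 0 ≤ dD s a) (s : S) (a : A) :
    (∑ a', dD s a') * behPolicy dD s a = dD s a := by
  rcases (Finset.sum_nonneg fun a' _ => hdD s a').eq_or_lt with h0 | hpos
  · rw [← h0, zero_mul]
    exact ((Finset.sum_eq_zero_iff_of_nonneg fun a' _ => hdD s a').1 h0.symm a
      (Finset.mem_univ a)).symm
  · rw [behPolicy, normPolicy, if_pos hpos, mul_div_cancel₀ _ hpos.ne']

lemma extractPolicy_le {c : ℝ} (hc : 0 < c) {s : S} {a : A} (hwpiD : 0 ≤ w s a * piD s a)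
    (hnorm : c ≤ ∑ a', piD s a' * w s a') :
    extractPolicy piD w s a ≤ w s a * piD s a / c := by
  simp only [mul_comm (piD s _)] at hnorm
  rw [extractPolicy, if_pos (hc.trans_le hnorm)]
  exact div_le_div_of_nonneg_left hwpiD hc hnorm

end Policy

variable {P : S → A → S → ℝ} {r : S → A → ℝ} {μ0 : S → ℝ} {γ : ℝ} {dD w : S → A → ℝ}
  {Bwu Bwl : ℝ}

lemma occ_extractPolicy_le [Nonempty A] (hP : ∀ s a, P s a ∈ stdSimplex ℝ S)
    (hμ0 : μ0 ∈ stdSimplex ℝ S) (hγ : γ ∈ Set.Ico 0 1) (hdD : ∀ s a, 0 ≤ dD s a)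
    (hw : ∀ s a, 0 ≤ w s a) (hBwl : 0 < Bwl)
    (hnorm : ∀ s, Bwl ≤ ∑ a, behPolicy dD s a * w s a)
    (hconc : ∀ s, ∑ a, occ P μ0 γ (extractPolicy (behPolicy dD) w) s a ≤ Bwu * ∑ a, dD s a)
    (s : S) (a : A) :
    occ P μ0 γ (extractPolicy (behPolicy dD) w) s a ≤ Bwu / Bwl * dstar dD w s a := by
  have hpol := isPolicy_extractPolicy (behPolicy_nonneg hdD) hw
  have hmarginal : 0 ≤ ∑ a', occ P μ0 γ (extractPolicy (behPolicy dD) w) s a' :=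
    Finset.sum_nonneg fun a' _ => occ_nonneg hP hμ0 hγ hpol s a'
  calc occ P μ0 γ (extractPolicy (behPolicy dD) w) s a
      = (∑ a', occ P μ0 γ (extractPolicy (behPolicy dD) w) s a')
          * extractPolicy (behPolicy dD) w s a := occ_eq_sum_mul hP hμ0 hγ hpol s a
    _ ≤ (Bwu * ∑ a', dD s a') * (w s a * behPolicy dD s a / Bwl) :=
        mul_le_mul (hconc s)
          (extractPolicy_le hBwl (mul_nonneg (hw s a) (behPolicy_nonneg hdD s a)) (hnorm s))
          (hpol.1 s a) (hmarginal.trans (hconc s))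
    _ = Bwu / Bwl * (w s a * ((∑ a', dD s a') * behPolicy dD s a)) := by ring
    _ = Bwu / Bwl * dstar dD w s a := by rw [sum_mul_behPolicy hdD, dstar]

end PolicyExtraction

section Lagrangian

/-- The contribution of one transition tuple `((s, a), s')` to the empirical Lagrangian: averaged
over the transition dataset it gives the `w`-dependent part of `L̂_α`, and averaged under
`tupleWeight` that of `L_α`. -/
noncomputable def lagSample {S A : Type*} (r : S → A → ℝ) (γ : ℝ) (f : ℝ → ℝ) (α : ℝ)
    (v : S → ℝ) (w : S → A → ℝ) (x : (S × A) × S) : ℝ :=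
  w x.1.1 x.1.2 * (r x.1.1 x.1.2 + γ * v x.2 - v x.1.1) - α * f (w x.1.1 x.1.2)

section Sample

variable {S A : Type*} {r : S → A → ℝ} {γ : ℝ} {f : ℝ → ℝ} {α : ℝ}

lemma empLag_eq_add_empMean {n n0 : ℕ} (D : Fin n → (S × A) × S) (D0 : Fin n0 → S) (v : S → ℝ)
    (w : S → A → ℝ) :
    empLag r γ f α D D0 v w = (1 - γ) * empMean v D0 + empMean (lagSample r γ f α v w) D := by
  simp only [empLag, empMean, lagSample, Finset.sum_sub_distrib, ← Finset.mul_sum]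
  ring

lemma abs_lagSample_zero_le (hγ : γ ∈ Set.Ico 0 1) (hr : ∀ s a, r s a ∈ Set.Icc 0 1)
    {v : S → ℝ} (hv : ∀ s, v s ∈ Set.Icc 0 (1 / (1 - γ))) {w : S → A → ℝ} {B : ℝ}
    (hw : ∀ s a, w s a ∈ Set.Icc 0 B) (x : (S × A) × S) :
    |lagSample r γ f 0 v w x| ≤ B * (1 / (1 - γ)) := by
  obtain ⟨⟨s, a⟩, s'⟩ := x
  have hdiscount : γ * v s' ≤ γ * (1 / (1 - γ)) := mul_le_mul_of_nonneg_left (hv s').2 hγ.1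
  have hhorizon : 1 + γ * (1 / (1 - γ)) = 1 / (1 - γ) := by
    have hne : 1 - γ ≠ 0 := (sub_pos.2 hγ.2).ne'
    field_simp
    ring
  have htd : |r s a + γ * v s' - v s| ≤ 1 / (1 - γ) :=
    abs_le.2 ⟨by linarith [(hr s a).1, mul_nonneg hγ.1 (hv s').1, (hv s).2],
      by linarith [(hr s a).2, (hv s).1]⟩
  rw [lagSample, zero_mul, sub_zero, abs_mul, abs_of_nonneg (hw s a).1]
  exact mul_le_mul (hw s a).2 htd (abs_nonneg _) ((hw s a).1.trans (hw s a).2)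

lemma IsProRLOutput.le_add_two_mul {V : Finset (S → ℝ)} {W : Finset (S → A → ℝ)} {n n0 : ℕ}
    {D : Fin n → (S × A) × S} {D0 : Fin n0 → S} {vhat : S → ℝ} {what : S → A → ℝ}
    (hout : IsProRLOutput r γ f α V W D D0 vhat what) {L : (S → ℝ) → (S → A → ℝ) → ℝ} {ε : ℝ}
    (hdev : ∀ v ∈ V, ∀ w ∈ W, |empLag r γ f α D D0 v w - L v w| ≤ ε) {w : S → A → ℝ}
    (hw : w ∈ W) {c : ℝ} (hc : ∀ v ∈ V, c ≤ L v w) {v : S → ℝ} (hv : v ∈ V) :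
    c ≤ L v what + 2 * ε := by
  obtain ⟨-, hwhat, hmin, hmax⟩ := hout
  obtain ⟨u, hu, humin⟩ := V.exists_min_image (fun v => empLag r γ f α D D0 v w) ⟨v, hv⟩
  calc c ≤ L u w := hc u hu
    _ ≤ empLag r γ f α D D0 u w + ε := by linarith [(abs_le.1 (hdev u hu w hw)).1]
    _ ≤ empLag r γ f α D D0 vhat what + ε := by gcongr; exact hmax w hw u hu humin
    _ ≤ empLag r γ f α D D0 v what + ε := by gcongr; exact hmin v hv
    _ ≤ L v what + 2 * ε := by linarith [(abs_le.1 (hdev v hv what hwhat)).2]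

end Sample

variable {P : S → A → S → ℝ} {r : S → A → ℝ} {μ0 : S → ℝ} {γ : ℝ} {dD : S → A → ℝ}
  {f : ℝ → ℝ} {α : ℝ}

lemma lag_eq_add_sum_tupleWeight_mul (hP : ∀ s a, P s a ∈ stdSimplex ℝ S) (v : S → ℝ)
    (w : S → A → ℝ) :
    Lag P r μ0 γ dD f α v w
      = (1 - γ) * ∑ s, μ0 s * v s + ∑ x, tupleWeight P dD x * lagSample r γ f α v w x := by
  have hcond (s : S) (a : A) :
      ∑ s', dD s a * P s a s' * (w s a * (r s a + γ * v s' - v s) - α * f (w s a))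
        = dD s a * (w s a * eV P r γ v s a) - α * (dD s a * f (w s a)) := by
    have hexp (s' : S) :
        dD s a * P s a s' * (w s a * (r s a + γ * v s' - v s) - α * f (w s a))
          = dD s a * (w s a * (r s a - v s) - α * f (w s a)) * P s a s'
            + dD s a * w s a * γ * (P s a s' * v s') := by ring
    simp only [hexp, Finset.sum_add_distrib, ← Finset.mul_sum, (hP s a).2, eV]
    ring
  simp only [Lag, Fintype.sum_prod_type, tupleWeight, lagSample, hcond, Finset.sum_sub_distrib,
    ← Finset.mul_sum]
  ring

lemma lag_zero (v : S → ℝ) (w : S → A → ℝ) :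
    Lag P r μ0 γ dD f 0 v w
      = (1 - γ) * ∑ s, μ0 s * v s + ∑ s, ∑ a, dstar dD w s a * eV P r γ v s a := by
  simp only [Lag, dstar, zero_mul, sub_zero, mul_assoc, mul_left_comm (w _ _)]

lemma abs_empLag_sub_lag_le (hP : ∀ s a, P s a ∈ stdSimplex ℝ S) (hγ : γ ≤ 1) {n n0 : ℕ}
    {D : Fin n → (S × A) × S} {D0 : Fin n0 → S} {v : S → ℝ} {w : S → A → ℝ} {ε0 ε1 : ℝ}
    (h0 : |empMean v D0 - ∑ s, μ0 s * v s| ≤ ε0)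
    (h1 : |empMean (lagSample r γ f α v w) D
      - ∑ x, tupleWeight P dD x * lagSample r γ f α v w x| ≤ ε1) :
    |empLag r γ f α D D0 v w - Lag P r μ0 γ dD f α v w| ≤ (1 - γ) * ε0 + ε1 := by
  have hγ' : 0 ≤ 1 - γ := sub_nonneg.2 hγ
  rw [empLag_eq_add_empMean, lag_eq_add_sum_tupleWeight_mul hP, add_sub_add_comm, ← mul_sub]
  refine (abs_add_le _ _).trans (add_le_add ?_ h1)
  rw [abs_mul, abs_of_nonneg hγ']
  exact mul_le_mul_of_nonneg_left h0 hγ'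

end Lagrangian

section UniformConcentration

variable {P : S → A → S → ℝ} {r : S → A → ℝ} {μ0 : S → ℝ} {γ : ℝ} {dD : S → A → ℝ}

lemma tupleWeight_mem_stdSimplex (hP : ∀ s a, P s a ∈ stdSimplex ℝ S)
    (hdD0 : ∀ s a, 0 ≤ dD s a) (hdD1 : ∑ s, ∑ a, dD s a = 1) :
    tupleWeight P dD ∈ stdSimplex ℝ ((S × A) × S) := by
  refine ⟨fun x => mul_nonneg (hdD0 x.1.1 x.1.2) ((hP x.1.1 x.1.2).1 x.2), ?_⟩
  simp only [Fintype.sum_prod_type, tupleWeight, ← Finset.mul_sum, (hP _ _).2, mul_one, hdD1]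

variable [MeasurableSpace S] [MeasurableSpace A]

lemma isProbabilityMeasure_dataMeasure (hP : ∀ s a, P s a ∈ stdSimplex ℝ S)
    (hμ0 : μ0 ∈ stdSimplex ℝ S) (hdD0 : ∀ s a, 0 ≤ dD s a) (hdD1 : ∑ s, ∑ a, dD s a = 1)
    (n n0 : ℕ) : IsProbabilityMeasure (dataMeasure P dD μ0 n n0) := by
  have := isProbabilityMeasure_discMeasure (tupleWeight_mem_stdSimplex hP hdD0 hdD1)
  have := isProbabilityMeasure_discMeasure hμ0
  unfold dataMeasure
  infer_instance

variable [MeasurableSingletonClass S] [MeasurableSingletonClass A]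

lemma measureReal_exists_epsStat_lt_abs_empLag_sub_lag_le (hP : ∀ s a, P s a ∈ stdSimplex ℝ S)
    (hμ0 : μ0 ∈ stdSimplex ℝ S) (hdD0 : ∀ s a, 0 ≤ dD s a) (hdD1 : ∑ s, ∑ a, dD s a = 1)
    (hγ : γ ≤ 1) {f : ℝ → ℝ} {α : ℝ} {V : Finset (S → ℝ)} {W : Finset (S → A → ℝ)}
    {a b Bf Bw Be : ℝ} (hV : ∀ v ∈ V, ∀ s, v s ∈ Set.Icc a b)
    (hVW : ∀ v ∈ V, ∀ w ∈ W, ∀ x, |lagSample r γ f α v w x| ≤ α * Bf + Bw * Be)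
    {n n0 : ℕ} (hn : 0 < n) (hn0 : 0 < n0) {δ : ℝ} (hδ0 : 0 < δ) (hδ1 : δ ≤ 1) :
    (dataMeasure P dD μ0 n n0).real {ω | ∃ v ∈ V, ∃ w ∈ W,
      epsStat γ α ((b - a) / 2) Bf Bw Be δ V.card W.card n n0
        < |empLag r γ f α ω.1 ω.2 v w - Lag P r μ0 γ dD f α v w|} ≤ δ := by
  have htuple := tupleWeight_mem_stdSimplex hP hdD0 hdD1
  have := isProbabilityMeasure_discMeasure htuple
  have := isProbabilityMeasure_discMeasure hμ0
  have := isProbabilityMeasure_dataMeasure hP hμ0 hdD0 hdD1 n n0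
  have hinit := measureReal_exists_lt_abs_empMean_sub_integral_le (μ := discMeasure μ0) V
    (g := id) (fun _ _ => .of_discrete) hV hn0 (half_pos hδ0) (by linarith)
  have htrans := measureReal_exists_lt_abs_empMean_sub_integral_le
    (μ := discMeasure (tupleWeight P dD)) (V ×ˢ W) (g := fun k => lagSample r γ f α k.1 k.2)
    (fun _ _ => .of_discrete)
    (fun k hk x => abs_le.1 (hVW k.1 (Finset.mem_product.1 hk).1 k.2 (Finset.mem_product.1 hk).2 x))
    hn (half_pos hδ0) (by linarith)
  have hscale (c : ℝ) : 2 * c / (δ / 2) = 4 * c / δ := by ring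
  simp only [integral_discMeasure hμ0.1, hscale, id] at hinit
  simp only [integral_discMeasure htuple.1, hscale, Finset.card_product, Nat.cast_mul,
    sub_neg_eq_add, add_self_div_two] at htrans
  refine (measureReal_mono ?_).trans ((measureReal_prod_fst_mem_or_snd_mem_le _ _).trans
    ((add_le_add htrans hinit).trans_eq (add_halves δ)))
  rintro ω ⟨v, hv, w, hw, hdev⟩
  by_contra! hω
  simp only [Set.mem_ofPred_eq, not_or, not_exists, not_and, not_lt] at hω
  refine hdev.not_ge ((abs_empLag_sub_lag_le hP hγ (hω.2 v hv)
    (hω.1 (v, w) (Finset.mk_mem_product hv hw))).trans_eq ?_)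
  rw [epsStat, mul_assoc]

end UniformConcentration

section Suboptimality

variable {P : S → A → S → ℝ} {r : S → A → ℝ} {μ0 : S → ℝ} {γ : ℝ} {dD π : S → A → ℝ}
  {f : ℝ → ℝ} {Bwu Bwl : ℝ}

lemma one_le_of_sum_occ_le (hP : ∀ s a, P s a ∈ stdSimplex ℝ S) (hμ0 : μ0 ∈ stdSimplex ℝ S)
    (hγ : γ ∈ Set.Ico 0 1) (hdD1 : ∑ s, ∑ a, dD s a = 1) (hπ : IsPolicy π)
    (hconc : ∀ s, ∑ a, occ P μ0 γ π s a ≤ Bwu * ∑ a, dD s a) : 1 ≤ Bwu :=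
  calc 1 = ∑ s, ∑ a, occ P μ0 γ π s a :=
        ((bellmanFlow_occ hP hμ0 hγ hπ).sum_eq_one hP hμ0 hγ.2.ne).symm
    _ ≤ ∑ s, Bwu * ∑ a, dD s a := Finset.sum_le_sum fun s _ => hconc s
    _ = Bwu := by rw [← Finset.mul_sum, hdD1, mul_one]

lemma IsProRLOutput.jret_sub_lag_le (hP : ∀ s a, P s a ∈ stdSimplex ℝ S)
    (hμ0 : μ0 ∈ stdSimplex ℝ S) (hγ : γ ∈ Set.Ico 0 1) {V : Finset (S → ℝ)}
    {W : Finset (S → A → ℝ)} {n n0 : ℕ} {D : Fin n → (S × A) × S} {D0 : Fin n0 → S}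
    {vhat : S → ℝ} {what : S → A → ℝ} (hout : IsProRLOutput r γ f 0 V W D D0 vhat what) {ε : ℝ}
    (hdev : ∀ v ∈ V, ∀ w ∈ W, |empLag r γ f 0 D D0 v w - Lag P r μ0 γ dD f 0 v w| ≤ ε)
    (hπ : IsPolicy π) {w : S → A → ℝ} (hocc : occ P μ0 γ π = dstar dD w) (hw : w ∈ W)
    {v : S → ℝ} (hv : v ∈ V) :
    Jret P r μ0 γ π - Lag P r μ0 γ dD f 0 v what ≤ 2 * ε := by
  have hvalue (u : S → ℝ) : Jret P r μ0 γ π = Lag P r μ0 γ dD f 0 u w := by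
    rw [lag_zero, ← hocc, jret_eq_add_sum_occ_mul_eV hP hμ0 hγ hπ u]
  rw [sub_le_iff_le_add']
  exact hout.le_add_two_mul hdev hw (fun u _ => (hvalue u).le) hv

variable [Nonempty A] {v : S → ℝ}

lemma jret_sub_jret_extractPolicy_le (hP : ∀ s a, P s a ∈ stdSimplex ℝ S)
    (hμ0 : μ0 ∈ stdSimplex ℝ S) (hγ : γ ∈ Set.Ico 0 1) (hdD : ∀ s a, 0 ≤ dD s a)
    {w : S → A → ℝ} (hw : ∀ s a, 0 ≤ w s a) (hBwl : 0 < Bwl)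
    (hnorm : ∀ s, Bwl ≤ ∑ a, behPolicy dD s a * w s a)
    (hconc : ∀ s, ∑ a, occ P μ0 γ (extractPolicy (behPolicy dD) w) s a ≤ Bwu * ∑ a, dD s a)
    (hv : IsOptValue P r γ v) (hπ : IsPolicy π)
    (hopt : ∀ π' : S → A → ℝ, IsPolicy π' → Jret P r μ0 γ π' ≤ Jret P r μ0 γ π) :
    Jret P r μ0 γ π - Jret P r μ0 γ (extractPolicy (behPolicy dD) w)
      ≤ Bwu / Bwl * (Jret P r μ0 γ π - Lag P r μ0 γ dD f 0 v w) := by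
  have hpol := isPolicy_extractPolicy (behPolicy_nonneg hdD) hw
  rw [jret_eq_add_sum_occ_mul_eV hP hμ0 hγ hpol v, lag_zero, hv.jret_eq hP hμ0 hγ hπ hopt,
    sub_add_cancel_left, sub_add_cancel_left, mul_neg, neg_le_neg_iff]
  simp only [Finset.mul_sum, ← mul_assoc]
  exact Finset.sum_le_sum fun s _ => Finset.sum_le_sum fun a _ =>
    mul_le_mul_of_nonpos_right (occ_extractPolicy_le hP hμ0 hγ hdD hw hBwl hnorm hconc s a)
      (hv.eV_nonpos s a)

lemma IsProRLOutput.jret_sub_jret_extractPolicy_le (hP : ∀ s a, P s a ∈ stdSimplex ℝ S)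
    (hμ0 : μ0 ∈ stdSimplex ℝ S) (hγ : γ ∈ Set.Ico 0 1) (hdD0 : ∀ s a, 0 ≤ dD s a)
    (hdD1 : ∑ s, ∑ a, dD s a = 1) {V : Finset (S → ℝ)} {W : Finset (S → A → ℝ)} {n n0 : ℕ}
    {D : Fin n → (S × A) × S} {D0 : Fin n0 → S} {vhat : S → ℝ} {what : S → A → ℝ}
    (hout : IsProRLOutput r γ f 0 V W D D0 vhat what) {ε : ℝ}
    (hdev : ∀ v ∈ V, ∀ w ∈ W, |empLag r γ f 0 D D0 v w - Lag P r μ0 γ dD f 0 v w| ≤ ε)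
    (hwhat : ∀ s a, 0 ≤ what s a) (hBwl : 0 < Bwl)
    (hnorm : ∀ s, Bwl ≤ ∑ a, behPolicy dD s a * what s a)
    (hconc : ∀ s, ∑ a, occ P μ0 γ (extractPolicy (behPolicy dD) what) s a ≤ Bwu * ∑ a, dD s a)
    (hv : IsOptValue P r γ v) (hvV : v ∈ V) (hπ : IsPolicy π)
    (hopt : ∀ π' : S → A → ℝ, IsPolicy π' → Jret P r μ0 γ π' ≤ Jret P r μ0 γ π)
    {w : S → A → ℝ} (hocc : occ P μ0 γ π = dstar dD w) (hw : w ∈ W) :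
    Jret P r μ0 γ π - Jret P r μ0 γ (extractPolicy (behPolicy dD) what)
      ≤ Bwu / Bwl * (2 * ε) := by
  have hBwu : 0 ≤ Bwu := zero_le_one.trans (one_le_of_sum_occ_le hP hμ0 hγ hdD1
    (isPolicy_extractPolicy (behPolicy_nonneg hdD0) hwhat) hconc)
  exact (ProRL.jret_sub_jret_extractPolicy_le hP hμ0 hγ hdD0 hwhat hBwl hnorm hconc hv hπ
    hopt).trans (mul_le_mul_of_nonneg_left (hout.jret_sub_lag_le hP hμ0 hγ hdev hπ hocc hw hvV)
      (div_nonneg hBwu hBwl.le))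

end Suboptimality

theorem stmt10_general {S A : Type*} [Fintype S] [Fintype A] [Nonempty A]
    [MeasurableSpace S] [MeasurableSpace A]
    [MeasurableSingletonClass S] [MeasurableSingletonClass A]
    {P : S → A → S → ℝ} {r : S → A → ℝ} {μ0 : S → ℝ} {γ : ℝ} {dD : S → A → ℝ}
    (hP : ∀ s a, P s a ∈ stdSimplex ℝ S) (hr : ∀ s a, r s a ∈ Set.Icc 0 1)
    (hμ0 : μ0 ∈ stdSimplex ℝ S) (hγ : γ ∈ Set.Ico 0 1)
    (hdD0 : ∀ s a, 0 ≤ dD s a) (hdD1 : ∑ s, ∑ a, dD s a = 1)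
    {f : ℝ → ℝ} {δ : ℝ} (hδ0 : 0 < δ) (hδ1 : δ ≤ 1) {Bw0 Bwu Bwl : ℝ} (hBwl : 0 < Bwl)
    {V : Finset (S → ℝ)} {W : Finset (S → A → ℝ)}
    (hV : ∀ v ∈ V, ∀ s, v s ∈ Set.Icc 0 (1 / (1 - γ)))
    (hW : ∀ w ∈ W, ∀ s a, w s a ∈ Set.Icc 0 Bw0)
    (hnorm : ∀ w ∈ W, ∀ s, Bwl ≤ ∑ a, behPolicy dD s a * w s a)
    (hconc : ∀ w ∈ W, ∀ s,
      ∑ a, occ P μ0 γ (extractPolicy (behPolicy dD) w) s a ≤ Bwu * ∑ a, dD s a)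
    {π0 : S → A → ℝ} (hπ0 : IsPolicy π0)
    (hopt : ∀ π : S → A → ℝ, IsPolicy π → Jret P r μ0 γ π ≤ Jret P r μ0 γ π0)
    {v0 : S → ℝ} (hv0 : IsOptValue P r γ v0) (hv0V : v0 ∈ V)
    {w0 : S → A → ℝ} (hw0 : occ P μ0 γ π0 = dstar dD w0) (hw0W : w0 ∈ W)
    {n n0 : ℕ} (hn : 0 < n) (hn0 : 0 < n0)
    {vhat : (Fin n → (S × A) × S) × (Fin n0 → S) → S → ℝ}
    {what : (Fin n → (S × A) × S) × (Fin n0 → S) → S → A → ℝ}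
    (halg : ∀ ω, IsProRLOutput r γ f 0 V W ω.1 ω.2 (vhat ω) (what ω)) :
    1 - ENNReal.ofReal δ ≤
      dataMeasure P dD μ0 n n0 {ω |
        Jret P r μ0 γ π0 - Jret P r μ0 γ (extractPolicy (behPolicy dD) (what ω))
          ≤ 2 * Bw0 * Bwu / ((1 - γ) * Bwl) *
              √(2 * Real.log (4 * ((V.card : ℝ) * (W.card : ℝ)) / δ) / (n : ℝ))
            + Bwu / Bwl * √(2 * Real.log (4 * (V.card : ℝ) / δ) / (n0 : ℝ))} := by
  have := isProbabilityMeasure_dataMeasure hP hμ0 hdD0 hdD1 n n0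
  have hconcentration := measureReal_exists_epsStat_lt_abs_empLag_sub_lag_le
    hP hμ0 hdD0 hdD1 hγ.2.le (f := f) (α := 0) (Bf := 0) hV
    (by simpa only [zero_mul, zero_add] using fun v hv w hw =>
      abs_lagSample_zero_le hγ hr (hV v hv) (hW w hw)) hn hn0 hδ0 hδ1
  refine one_sub_ofReal_le_measure_of_measureReal_compl_le
    ((measureReal_mono fun ω hω => ?_).trans hconcentration)
  by_contra! hdev
  simp only [Set.mem_ofPred_eq, not_exists, not_and, not_lt] at hdev
  have hwhat := (halg ω).2.1
  refine hω (((halg ω).jret_sub_jret_extractPolicy_le hP hμ0 hγ hdD0 hdD1 hdev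
    (fun s a => (hW _ hwhat s a).1) hBwl (hnorm _ hwhat) (hconc _ hwhat) hv0 hv0V hπ0 hopt
    hw0 hw0W).trans_eq ?_)
  have hγ' : 1 - γ ≠ 0 := (sub_pos.2 hγ.2).ne'
  rw [epsStat]
  field_simp
  ring

/-- Corollary 7: PRO-RL with `α = 0` under strong concentrability. -/
theorem stmt10
    {S A : Type*} [Fintype S] [Fintype A] [Nonempty S] [Nonempty A]
    [MeasurableSpace S] [MeasurableSpace A]
    [MeasurableSingletonClass S] [MeasurableSingletonClass A]
    (P : S → A → S → ℝ) (r : S → A → ℝ) (μ0 : S → ℝ) (γ : ℝ) (dD : S → A → ℝ)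
    (hMDP : MDPAssumptions P r μ0 γ dD)
    (f : ℝ → ℝ) (δ : ℝ) (hδ0 : 0 < δ) (hδ1 : δ < 1)
    (Bw0 Bwu Bwl : ℝ) (hBwl : 0 < Bwl)
    -- π*₀ is an optimal policy with occupancy d*₀
    (π0 : S → A → ℝ) (hπ0 : IsPolicy π0)
    (hopt : ∀ π : S → A → ℝ, IsPolicy π → Jret P r μ0 γ π ≤ Jret P r μ0 γ π0)
    -- strong concentrability: d^π(s)/d^D(s) ≤ B_{w,u} for all π, d*₀(s)/d^D(s) ≥ B_{w,l}
    (hconc1 : ∀ π : S → A → ℝ, IsPolicy π → ∀ s,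
      (∑ a : A, occ P μ0 γ π s a) ≤ Bwu * ∑ a : A, dD s a)
    (hconc2 : ∀ s, Bwl * (∑ a : A, dD s a) ≤ ∑ a : A, occ P μ0 γ π0 s a)
    -- coverage of d*₀ and realizability of (v*₀, w*₀)
    (hA1 : ∀ s a, occ P μ0 γ π0 s a ≤ Bw0 * dD s a)
    (v0 : S → ℝ) (hv0 : IsOptValue P r γ v0)
    (w0 : S → A → ℝ) (hw0 : ∀ s a, occ P μ0 γ π0 s a = w0 s a * dD s a)
    (V : Finset (S → ℝ)) (W : Finset (S → A → ℝ))
    (hA2 : v0 ∈ V) (hA3 : w0 ∈ W)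
    (hA4 : ∀ w ∈ W, ∀ s a, 0 ≤ w s a ∧ w s a ≤ Bw0)
    -- W good: Σ_a π_D(a|s) w(s,a) ≥ B_{w,l}
    (hWgood : ∀ w ∈ W, ∀ s, Bwl ≤ ∑ a : A, behPolicy dD s a * w s a)
    -- V good: 0 ≤ v ≤ 1/(1−γ)
    (hVgood : ∀ v ∈ V, ∀ s, 0 ≤ v s ∧ v s ≤ 1 / (1 - γ))
    (n n0 : ℕ) (hn : 0 < n) (hn0 : 0 < n0)
    (vhat : (Fin n → (S × A) × S) × (Fin n0 → S) → S → ℝ)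
    (what : (Fin n → (S × A) × S) × (Fin n0 → S) → S → A → ℝ)
    -- PRO-RL with input α = 0
    (halg : ∀ ω, IsProRLOutput r γ f 0 V W ω.1 ω.2 (vhat ω) (what ω)) :
    1 - ENNReal.ofReal δ ≤
      dataMeasure P dD μ0 n n0 {ω |
        Jret P r μ0 γ π0 - Jret P r μ0 γ (extractPolicy (behPolicy dD) (what ω))
          ≤ 2 * Bw0 * Bwu / ((1 - γ) * Bwl) *
              Real.sqrt (2 * Real.log (4 * ((V.card : ℝ) * (W.card : ℝ)) / δ) / (n : ℝ))
            + Bwu / Bwl *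
              Real.sqrt (2 * Real.log (4 * (V.card : ℝ) / δ) / (n0 : ℝ)) } := by
  exact stmt10_general (fun s a => ⟨hMDP.P_nonneg s a, hMDP.P_sum s a⟩)
    (fun s a => ⟨hMDP.r_nonneg s a, hMDP.r_le_one s a⟩)
    ⟨fun s => (hMDP.μ0_pos s).le, hMDP.μ0_sum⟩ ⟨hMDP.γ_nonneg, hMDP.γ_lt_one⟩
    hMDP.dD_nonneg hMDP.dD_sum hδ0 hδ1.le hBwl hVgood hA4 hWgood
    (fun w hw => hconc1 _ (isPolicy_extractPolicy (behPolicy_nonneg hMDP.dD_nonneg)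
      fun s a => (hA4 w hw s a).1))
    hπ0 hopt hv0 hA2 (funext₂ hw0) hA3 hn hn0 halg

end ProRL
end

section
/- Suppose d*_α(s,a)/d^D(s,a) ≤ B_{w,α} for all (s,a) and f satisfies |f'(x)| ≤ B_{f',α} for 0 ≤ x ≤ B_{w,α}. Then ‖v*_α‖_∞ ≤ (α·B_{f',α} + 1)/(1−γ). -/
open MeasureTheory
open scoped BigOperators ENNReal

namespace ProRL

variable {S A : Type*} [Fintype S] [Fintype A]

/-! Minimality of `L_α(·, w)`, an affine function of `v`, is the Bellman flow equation for
`d = w · d^D`, and since `μ0 > 0` a nonnegative solution of it charges some action in every state.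
There `w > 0` maximizes its own summand of `L_α(v, ·)` in the interior of `[0, ∞)`, so that
`e_v = α f'(w)`. As `v = r + γ P v - e_v`, this gives `‖v‖ ≤ ‖r‖ + γ ‖v‖ + α B_{f'}`. -/

theorem isMaxOn_apply_of_isMaxOn_sum {ι : Type*} [Fintype ι] {β : ι → Type*} {M : Type*}
    [AddCommMonoid M] [PartialOrder M] [IsOrderedCancelAddMonoid M]
    {C : ∀ i, Set (β i)} {w : ∀ i, β i} (g : ∀ i, β i → M)
    (h : IsMaxOn (fun w' => ∑ i, g i (w' i)) (Set.univ.pi C) w) (hw : w ∈ Set.univ.pi C)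
    (i : ι) : IsMaxOn (g i) (C i) (w i) := by
  classical
  intro x hx
  have hmem : Function.update w i x ∈ Set.univ.pi C :=
    (Set.update_mem_pi_iff_of_mem hw).2 fun _ => hx
  have hle : ∑ j, g j (Function.update w i x j) ≤ ∑ j, g j (w j) := h hmem
  have hrest : ∑ j ∈ Finset.univ.erase i, g j (Function.update w i x j) =
      ∑ j ∈ Finset.univ.erase i, g j (w j) :=
    Finset.sum_congr rfl fun j hj => by rw [Function.update_of_ne (Finset.ne_of_mem_erase hj)]
  rw [← Finset.add_sum_erase _ _ (Finset.mem_univ i),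
    ← Finset.add_sum_erase _ (fun j => g j (w j)) (Finset.mem_univ i), hrest,
    Function.update_self] at hle
  exact le_of_add_le_add_right hle

theorem eq_zero_of_forall_sum_mul_le {ι R : Type*} [Fintype ι] [Ring R] [LinearOrder R]
    [IsStrictOrderedRing R] {c v : ι → R}
    (h : ∀ v' : ι → R, ∑ i, c i * v i ≤ ∑ i, c i * v' i) : c = 0 := by
  have hle : c ⬝ᵥ v ≤ c ⬝ᵥ (v - c) := h (v - c)
  rw [dotProduct_sub, le_sub_self_iff] at hle
  exact dotProduct_self_eq_zero.1 <|
    hle.antisymm (Finset.sum_nonneg fun i _ => mul_self_nonneg (c i))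

theorem abs_sum_mul_le_norm {ι : Type*} [Fintype ι] {p : ι → ℝ} (hp : ∀ i, 0 ≤ p i)
    (hp_sum : ∑ i, p i ≤ 1) (v : ι → ℝ) : |∑ i, p i * v i| ≤ ‖v‖ :=
  calc |∑ i, p i * v i| ≤ ∑ i, |p i * v i| := Finset.abs_sum_le_sum_abs _ _
    _ ≤ ∑ i, p i * ‖v‖ := by
      refine Finset.sum_le_sum fun i _ => ?_
      rw [abs_mul, abs_of_nonneg (hp i)]
      exact mul_le_mul_of_nonneg_left (norm_le_pi_norm v i) (hp i)
    _ = (∑ i, p i) * ‖v‖ := (Finset.sum_mul ..).symm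
    _ ≤ ‖v‖ := mul_le_of_le_one_left (norm_nonneg v) hp_sum

theorem pi_norm_le_div_one_sub {ι : Type*} [Fintype ι] [Nonempty ι] {E : ι → Type*}
    [∀ i, SeminormedAddCommGroup (E i)] {v : ∀ i, E i} {C γ : ℝ} (hγ : γ < 1)
    (h : ∀ i, ‖v i‖ ≤ C + γ * ‖v‖) : ‖v‖ ≤ C / (1 - γ) := by
  have hnorm : ‖v‖ ≤ C + γ * ‖v‖ := (pi_norm_le_iff_of_nonempty v).2 h
  rw [le_div_iff₀ (sub_pos.2 hγ)]
  linarith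

theorem abs_apply_le_abs_eV_add {S A : Type*} [Fintype S] {P : S → A → S → ℝ} {γ : ℝ} {s : S}
    {a : A} (hP : ∀ s', 0 ≤ P s a s') (hP_sum : ∑ s', P s a s' ≤ 1) (hγ : 0 ≤ γ)
    (r : S → A → ℝ) (v : S → ℝ) :
    |v s| ≤ |eV P r γ v s a| + |r s a| + γ * ‖v‖ := by
  have hv : v s = -eV P r γ v s a + r s a + γ * ∑ s', P s a s' * v s' := by
    rw [eV]
    ring
  calc |v s| ≤ |-eV P r γ v s a| + |r s a| + |γ * ∑ s', P s a s' * v s'| := by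
        rw [hv]
        exact abs_add_three _ _ _
    _ = |eV P r γ v s a| + |r s a| + γ * |∑ s', P s a s' * v s'| := by
        rw [abs_neg, abs_mul, abs_of_nonneg hγ]
    _ ≤ |eV P r γ v s a| + |r s a| + γ * ‖v‖ := by
        gcongr
        exact abs_sum_mul_le_norm hP hP_sum v

/-- The excess of inflow over outflow at `s` in the Bellman flow equations for `d`. It is the
coefficient of `v s` in the Lagrangian when `d = w · d^D`. -/
noncomputable def flowResidual (P : S → A → S → ℝ) (μ0 : S → ℝ) (γ : ℝ) (d : S → A → ℝ)
    (s : S) : ℝ :=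
  (1 - γ) * μ0 s + γ * ∑ s' : S, ∑ a' : A, P s' a' s * d s' a' - ∑ a : A, d s a

section Lagrangian

variable {P : S → A → S → ℝ} {r : S → A → ℝ} {μ0 : S → ℝ} {γ : ℝ} {dD : S → A → ℝ}
  {f f' : ℝ → ℝ} {α : ℝ} {v : S → ℝ} {w : S → A → ℝ}

theorem flowResidual_eq_zero_iff {d : S → A → ℝ} :
    flowResidual P μ0 γ d = 0 ↔ BellmanFlow P μ0 γ d :=
  funext_iff.trans <| forall_congr' fun _ => sub_eq_zero.trans eq_comm

variable (P μ0 γ v) in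
theorem sum_flowResidual_mul (d : S → A → ℝ) :
    ∑ s, flowResidual P μ0 γ d s * v s =
      (1 - γ) * ∑ s, μ0 s * v s + γ * ∑ s, ∑ a, d s a * ∑ s', P s a s' * v s'
        - ∑ s, ∑ a, d s a * v s := by
  have inflow_comm : ∑ s, (∑ s', ∑ a', P s' a' s * d s' a') * v s =
      ∑ s, ∑ a, d s a * ∑ s', P s a s' * v s' := by
    simp only [Finset.sum_mul, Finset.mul_sum]
    rw [Finset.sum_comm]
    refine Finset.sum_congr rfl fun s' _ => ?_
    rw [Finset.sum_comm]
    exact Finset.sum_congr rfl fun _ _ => Finset.sum_congr rfl fun _ _ => by ring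
  simp only [flowResidual, sub_mul, add_mul, mul_assoc, Finset.sum_sub_distrib,
    Finset.sum_add_distrib, ← Finset.mul_sum, inflow_comm]
  simp only [Finset.sum_mul]

variable (P r μ0 γ dD f α v w)

theorem Lag_eq_add_sum_flowResidual_mul :
    Lag P r μ0 γ dD f α v w =
      (∑ s, ∑ a, dstar dD w s a * r s a - α * ∑ s, ∑ a, dD s a * f (w s a))
        + ∑ s, flowResidual P μ0 γ (dstar dD w) s * v s := by
  have weighted_eV (s : S) (a : A) : dD s a * (w s a * eV P r γ v s a) =
      dstar dD w s a * r s a + γ * (dstar dD w s a * ∑ s', P s a s' * v s')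
        - dstar dD w s a * v s := by
    rw [eV, dstar]
    ring
  simp only [Lag, sum_flowResidual_mul, weighted_eV, Finset.sum_sub_distrib,
    Finset.sum_add_distrib, ← Finset.mul_sum]
  ring

theorem Lag_eq_add_sum_mul_sub :
    Lag P r μ0 γ dD f α v w = (1 - γ) * ∑ s, μ0 s * v s
      + ∑ s, ∑ a, dD s a * (w s a * eV P r γ v s a - α * f (w s a)) := by
  simp only [Lag, mul_sub, mul_left_comm _ α, Finset.sum_sub_distrib, ← Finset.mul_sum]
  ring

variable {P r μ0 γ dD f α v w}

theorem IsSaddle.bellmanFlow (h : IsSaddle P r μ0 γ dD f α v w) :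
    BellmanFlow P μ0 γ (dstar dD w) := by
  refine flowResidual_eq_zero_iff.1 (eq_zero_of_forall_sum_mul_le (v := v) fun v' => ?_)
  have hmin := h.2.1 v'
  rwa [Lag_eq_add_sum_flowResidual_mul, Lag_eq_add_sum_flowResidual_mul,
    add_le_add_iff_left] at hmin

theorem IsSaddle.isMaxOn_summand (h : IsSaddle P r μ0 γ dD f α v w) (s : S) (a : A) :
    IsMaxOn (fun x => dD s a * (x * eV P r γ v s a - α * f x)) (Set.Ici 0) (w s a) := by
  have hw : w ∈ Set.univ.pi fun _ => Set.univ.pi fun _ => Set.Ici 0 :=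
    fun s _ a _ => h.1 s a
  have hmax : IsMaxOn
      (fun w' => ∑ s, ∑ a, dD s a * (w' s a * eV P r γ v s a - α * f (w' s a)))
      (Set.univ.pi fun _ => Set.univ.pi fun _ => Set.Ici 0) w := by
    intro w' hw'
    have hle := h.2.2 w' fun s a => hw' s trivial a trivial
    rwa [Lag_eq_add_sum_mul_sub, Lag_eq_add_sum_mul_sub, add_le_add_iff_left] at hle
  have hmax_s : IsMaxOn (fun u => ∑ a, dD s a * (u a * eV P r γ v s a - α * f (u a)))
      (Set.univ.pi fun _ => Set.Ici 0) (w s) :=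
    isMaxOn_apply_of_isMaxOn_sum
      (fun s (u : A → ℝ) => ∑ a, dD s a * (u a * eV P r γ v s a - α * f (u a))) hmax hw s
  exact isMaxOn_apply_of_isMaxOn_sum
    (fun a x => dD s a * (x * eV P r γ v s a - α * f x)) hmax_s (hw s trivial) a

theorem IsSaddle.eV_eq_mul_deriv (h : IsSaddle P r μ0 γ dD f α v w) {s : S} {a : A} {m : ℝ}
    (hdD : dD s a ≠ 0) (hw : 0 < w s a) (hf : HasDerivAt f m (w s a)) :
    eV P r γ v s a = α * m := by
  have hmax : IsLocalMax (fun x => dD s a * (x * eV P r γ v s a - α * f x)) (w s a) :=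
    (h.isMaxOn_summand s a).isLocalMax (Ici_mem_nhds hw)
  have hder := (((hasDerivAt_id (w s a)).mul_const (eV P r γ v s a)).sub
    (hf.const_mul α)).const_mul (dD s a)
  have hzero := (mul_eq_zero.1 (hmax.hasDerivAt_eq_zero hder)).resolve_left hdD
  rwa [one_mul, sub_eq_zero] at hzero

theorem BellmanFlow.exists_pos {d : S → A → ℝ} (hflow : BellmanFlow P μ0 γ d)
    (hP : ∀ s a s', 0 ≤ P s a s') (hγ₀ : 0 ≤ γ) (hγ₁ : γ < 1) (hd : ∀ s a, 0 ≤ d s a)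
    {s : S} (hμ0 : 0 < μ0 s) : ∃ a, 0 < d s a := by
  have hinflow : 0 ≤ ∑ s', ∑ a', P s' a' s * d s' a' :=
    Finset.sum_nonneg fun s' _ => Finset.sum_nonneg fun a' _ =>
      mul_nonneg (hP s' a' s) (hd s' a')
  have hsum : 0 < ∑ a, d s a := by
    rw [hflow s]
    exact add_pos_of_pos_of_nonneg (mul_pos (sub_pos.2 hγ₁) hμ0) (mul_nonneg hγ₀ hinflow)
  obtain ⟨a, -, ha⟩ := (Finset.sum_pos_iff_of_nonneg fun a _ => hd s a).1 hsum
  exact ⟨a, ha⟩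

theorem IsSaddle.exists_abs_eV_le (h : IsSaddle P r μ0 γ dD f α v w)
    (hP : ∀ s a s', 0 ≤ P s a s') (hγ₀ : 0 ≤ γ) (hγ₁ : γ < 1) (hdD : ∀ s a, 0 ≤ dD s a)
    (hα : 0 ≤ α) {Bw Bf' : ℝ} (hderiv : ∀ x, 0 < x → x ≤ Bw → HasDerivAt f (f' x) x)
    (hBf' : ∀ x, 0 < x → x ≤ Bw → |f' x| ≤ Bf')
    (hBw : ∀ s a, dstar dD w s a ≤ Bw * dD s a) {s : S} (hμ0 : 0 < μ0 s) :
    ∃ a, |eV P r γ v s a| ≤ α * Bf' := by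
  have hd (s : S) (a : A) : 0 ≤ dstar dD w s a := mul_nonneg (h.1 s a) (hdD s a)
  obtain ⟨a, ha⟩ := h.bellmanFlow.exists_pos hP hγ₀ hγ₁ hd hμ0
  have hdD_pos : 0 < dD s a := pos_of_mul_pos_right ha (h.1 s a)
  have hw_pos : 0 < w s a := pos_of_mul_pos_left ha (hdD s a)
  have hw_le : w s a ≤ Bw := le_of_mul_le_mul_right (hBw s a) hdD_pos
  refine ⟨a, ?_⟩
  rw [h.eV_eq_mul_deriv hdD_pos.ne' hw_pos (hderiv _ hw_pos hw_le), abs_mul, abs_of_nonneg hα]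
  exact mul_le_mul_of_nonneg_left (hBf' _ hw_pos hw_le) hα

theorem stmt12_general
    (hP : ∀ s a s', 0 ≤ P s a s') (hP_sum : ∀ s a, ∑ s', P s a s' ≤ 1) {R : ℝ}
    (hr : ∀ s a, |r s a| ≤ R) (hγ₀ : 0 ≤ γ) (hγ₁ : γ < 1) (hμ0 : ∀ s, 0 < μ0 s)
    (hdD : ∀ s a, 0 ≤ dD s a) (hα : 0 ≤ α) {Bw Bf' : ℝ}
    (hderiv : ∀ x, 0 < x → x ≤ Bw → HasDerivAt f (f' x) x)
    (hBf' : ∀ x, 0 < x → x ≤ Bw → |f' x| ≤ Bf')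
    (hsad : IsSaddle P r μ0 γ dD f α v w) (hBw : ∀ s a, dstar dD w s a ≤ Bw * dD s a)
    (s : S) : |v s| ≤ (α * Bf' + R) / (1 - γ) := by
  have : Nonempty S := ⟨s⟩
  refine (norm_le_pi_norm v s).trans (pi_norm_le_div_one_sub hγ₁ fun s => ?_)
  obtain ⟨a, ha⟩ := hsad.exists_abs_eV_le hP hγ₀ hγ₁ hdD hα hderiv hBf' hBw (hμ0 s)
  calc |v s| ≤ |eV P r γ v s a| + |r s a| + γ * ‖v‖ :=
        abs_apply_le_abs_eV_add (hP s a) (hP_sum s a) hγ₀ r v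
    _ ≤ α * Bf' + R + γ * ‖v‖ := by
        gcongr
        exact hr s a

end Lagrangian

/-- Lemma 4: boundedness of `v*_α`. -/
theorem stmt12
    {S A : Type*} [Fintype S] [Fintype A] [Nonempty S] [Nonempty A]
    (P : S → A → S → ℝ) (r : S → A → ℝ) (μ0 : S → ℝ) (γ : ℝ) (dD : S → A → ℝ)
    (hMDP : MDPAssumptions P r μ0 γ dD)
    (f f' : ℝ → ℝ) (α Mf Bw Bf' : ℝ) (hα : 0 < α)
    (hderiv : ∀ x, HasDerivAt f (f' x) x) (hMf : 0 < Mf)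
    (hsc : StrongConvexOn Set.univ Mf f)
    (hBf' : ∀ x, 0 ≤ x → x ≤ Bw → |f' x| ≤ Bf')
    (vst : S → ℝ) (wst : S → A → ℝ)
    (hsad : IsSaddle P r μ0 γ dD f α vst wst)
    -- d*_α = w*_α · d^D satisfies the Bellman flow equations
    (hflow : BellmanFlow P μ0 γ (dstar dD wst))
    -- (A1): d*_α / d^D ≤ B_{w,α}
    (hA1 : ∀ s a, dstar dD wst s a ≤ Bw * dD s a) :
    ∀ s, |vst s| ≤ (α * Bf' + 1) / (1 - γ) := by
  exact stmt12_general hMDP.P_nonneg (fun s a => (hMDP.P_sum s a).le)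
    (fun s a => (abs_of_nonneg (hMDP.r_nonneg s a)).trans_le (hMDP.r_le_one s a))
    hMDP.γ_nonneg hMDP.γ_lt_one hMDP.μ0_pos hMDP.dD_nonneg hα.le (fun x _ _ => hderiv x)
    (fun x hx => hBf' x hx.le) hsad hA1

end ProRL
end
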